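/- Let p₁ ≥ p₂ ≥ ⋯ ≥ pₙ ≥ 0 be real numbers, 0 ≤ x ≤ 1/2, k ≥ 1 a real number, and l = ((1+k)^x - (1/2)^x)/k^x. Then (p₁ + p₂ + ⋯ + pₙ)^x ≥ (1/2)^x · (l^(n-1) p₁^x + l^(n-2) p₂^x + ⋯ + l^0 pₙ^x). -/

import Mathlib

lemma aux_anti (x : ℝ) (hx0 : 0 < x) (hx : x ≤ 1 / 2) :
    AntitoneOn (fun u : ℝ => (1 + u) ^ x - (u / 2) ^ x) (Set.Icc 0 1) := by
  have hd : ∀ u : ℝ, 0 < u → HasDerivAt (fun u : ℝ => (1 + u) ^ x - (u / 2) ^ x)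
      (1 * x * (1 + u) ^ (x - 1) - (1 / 2) * x * (u / 2) ^ (x - 1)) u := by
    intro u hu
    have h1 : HasDerivAt (fun u : ℝ => 1 + u) 1 u := (hasDerivAt_id u).const_add 1
    have h2 : HasDerivAt (fun u : ℝ => u / 2) (1 / 2) u := (hasDerivAt_id u).div_const 2
    exact (h1.rpow_const (Or.inl (by positivity))).sub
      (h2.rpow_const (Or.inl (by positivity)))
  apply antitoneOn_of_deriv_nonpos (convex_Icc 0 1)
  · apply ContinuousOn.sub
    · exact ContinuousOn.rpow_const (by fun_prop) (fun _ _ => Or.inr hx0.le)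
    · exact ContinuousOn.rpow_const (by fun_prop) (fun _ _ => Or.inr hx0.le)
  · intro u hu
    rw [interior_Icc] at hu
    exact (hd u hu.1).differentiableAt.differentiableWithinAt
  · intro u hu
    rw [interior_Icc] at hu
    obtain ⟨h0, h1⟩ := hu
    rw [(hd u h0).deriv]
    have key : (1 + u) ^ (x - 1) ≤ (1 / 2) * (u / 2) ^ (x - 1) := by
      have e1 : (1 + u) ^ (x - 1) ≤ (2 * u) ^ (x - 1) :=
        Real.rpow_le_rpow_of_nonpos (by positivity) (by linarith) (by linarith)
      have e2 : (2 * u) ^ (x - 1) = (4 : ℝ) ^ (x - 1) * (u / 2) ^ (x - 1) := by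
        rw [← Real.mul_rpow (by norm_num) (by positivity)]; congr 1; ring
      have e3 : (4 : ℝ) ^ (x - 1) ≤ 1 / 2 := by
        calc (4 : ℝ) ^ (x - 1) ≤ 4 ^ (-(1 / 2) : ℝ) :=
              Real.rpow_le_rpow_of_exponent_le (by norm_num) (by linarith)
          _ = 1 / 2 := by
              rw [show (4 : ℝ) = 2 ^ (2 : ℝ) by norm_num, ← Real.rpow_mul (by norm_num)]
              norm_num [Real.rpow_neg_one]
      rw [e2] at e1
      exact e1.trans (mul_le_mul_of_nonneg_right e3 (by positivity))
    nlinarith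

lemma aux_form (x t : ℝ) (ht : 0 < t) :
    ((1 + t) ^ x - (1 / 2 : ℝ) ^ x) / t ^ x = (1 + 1 / t) ^ x - (1 / t / 2) ^ x := by
  rw [sub_div, ← Real.div_rpow (by positivity) ht.le, ← Real.div_rpow (by norm_num) ht.le]
  congr 2 <;> field_simp <;> ring

lemma aux_step (x k S q : ℝ) (hx0 : 0 ≤ x) (hx : x ≤ 1 / 2) (hk : 1 ≤ k)
    (hS : 0 ≤ S) (hq : 0 ≤ q) (h : q = 0 ∨ S / q ≥ k) :
    ((1 + k) ^ x - (1 / 2 : ℝ) ^ x) / k ^ x * S ^ x + (1 / 2 : ℝ) ^ x * q ^ x ≤ (S + q) ^ x := by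
  rcases hx0.eq_or_lt with rfl | hx0
  · simp
  have hk0 : 0 < k := by linarith
  have hkm : 1 / k ∈ Set.Icc (0 : ℝ) 1 := ⟨by positivity, by rw [div_le_one hk0]; exact hk⟩
  have A := aux_anti x hx0 hx
  rw [aux_form x k hk0]
  rcases hq.eq_or_lt with rfl | hq
  · have := A (by simp : (0 : ℝ) ∈ Set.Icc (0 : ℝ) 1) hkm hkm.1
    simp only [add_zero, Real.one_rpow, zero_div, Real.zero_rpow hx0.ne', sub_zero,
      mul_zero] at this ⊢
    exact mul_le_of_le_one_left (by positivity) this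
  · have h : k ≤ S / q := h.resolve_left hq.ne'
    have ht : 0 < S / q := by linarith
    have hle : 1 / (S / q) ≤ 1 / k := one_div_le_one_div_of_le hk0 h
    have := A ⟨by positivity, hle.trans hkm.2⟩ hkm hle
    simp only at this
    rw [← aux_form x _ ht, le_div_iff₀ (by positivity)] at this
    have e1 : S ^ x = (S / q) ^ x * q ^ x := by
      rw [← Real.mul_rpow ht.le hq.le]; congr 1; field_simp
    have e2 : (S + q) ^ x = (1 + S / q) ^ x * q ^ x := by
      rw [← Real.mul_rpow (by positivity) hq.le]; congr 1; field_simp; ring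
    rw [e1, e2]
    have := mul_le_mul_of_nonneg_right this (by positivity : 0 ≤ q ^ x)
    linarith

theorem lemma2_part1 (n : ℕ) (hn : 1 ≤ n) (p : ℕ → ℝ) (x k : ℝ)
    (hord : ∀ i j, i ≤ j → j < n → p j ≤ p i)
    (hpos : ∀ i, i < n → 0 ≤ p i)
    (hx0 : 0 ≤ x) (hx : x ≤ 1 / 2) (hk : 1 ≤ k)
    (hratio : ∀ j, j + 1 < n →
      p (j + 1) = 0 ∨ (∑ i ∈ Finset.range (j + 1), p i) / p (j + 1) ≥ k) :
    (∑ i ∈ Finset.range n, p i) ^ x ≥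
      (1 / 2 : ℝ) ^ x * ∑ i ∈ Finset.range n,
        (((1 + k) ^ x - (1 / 2 : ℝ) ^ x) / k ^ x) ^ (n - 1 - i) * p i ^ x := by
  clear hord
  have hl : 0 ≤ ((1 + k) ^ x - (1 / 2 : ℝ) ^ x) / k ^ x := by
    apply div_nonneg _ (by positivity)
    rw [sub_nonneg]
    exact Real.rpow_le_rpow (by norm_num) (by linarith) hx0
  have step := fun S q => aux_step x k S q hx0 hx hk
  generalize ((1 + k) ^ x - (1 / 2 : ℝ) ^ x) / k ^ x = l at *
  induction n, hn using Nat.le_induction with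
  | base =>
    have : (1 / 2 : ℝ) ^ x ≤ 1 := Real.rpow_le_one (by norm_num) (by norm_num) hx0
    have h0 := hpos 0 (by norm_num)
    simp only [Finset.sum_range_one, ge_iff_le, Nat.sub_self, pow_zero, one_mul]
    exact mul_le_of_le_one_left (by positivity) this
  | succ m hm ih =>
    have ih := ih (fun i hi => hpos i (by omega)) (fun j hj => hratio j (by omega))
    have hS : 0 ≤ ∑ i ∈ Finset.range m, p i :=
      Finset.sum_nonneg fun i hi => hpos i (by have := Finset.mem_range.1 hi; omega)
    have hr := hratio (m - 1) (by omega)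
    rw [Nat.sub_add_cancel hm] at hr
    have s := step _ _ hS (hpos m (by omega)) hr
    have e : ∑ i ∈ Finset.range m, l ^ (m + 1 - 1 - i) * p i ^ x
        = l * ∑ i ∈ Finset.range m, l ^ (m - 1 - i) * p i ^ x := by
      rw [Finset.mul_sum]
      refine Finset.sum_congr rfl fun i hi => ?_
      have := Finset.mem_range.1 hi
      rw [show m + 1 - 1 - i = (m - 1 - i) + 1 by omega, pow_succ]
      ring
    rw [Finset.sum_range_succ, Finset.sum_range_succ, e]
    have := mul_le_mul_of_nonneg_left ih hl
    simp only [Nat.add_sub_cancel, Nat.sub_self, pow_zero, one_mul]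
    linarith
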